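/- Under the model assumptions (columns of M absolutely summable with p fixed, entries of Γ absolutely summable, δ with i.i.d. standard complex Gaussian entries, m/N → c > 0), the signal term γ̂_m^{sign}(λ) = d_m(λ)^H·((1/N)·M δ^H Γ δ M^H)·d_m(λ) satisfies sup_{λ∈[0,2π)} | γ̂_m^{sign}(λ) | → 0 almost surely as N → ∞. -/

import Mathlib

open MeasureTheory ProbabilityTheory Filter Matrix Real
open scoped ComplexOrder

noncomputable section

/-- Spectral norm (largest singular value) of a complex matrix. -/
def opNorm {a b : ℕ} (A : Matrix (Fin a) (Fin b) ℂ) : ℝ :=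
  ‖LinearMap.toContinuousLinearMap (Matrix.toEuclideanLin A)‖

/-- Fourier vector `d_m(λ) = m^{-1/2} (1, e^{-iλ}, …, e^{-i(m-1)λ})ᵀ`. -/
def dm (m : ℕ) (l : ℝ) : Fin m → ℂ :=
  fun j => (Real.sqrt m : ℂ)⁻¹ * Complex.exp (-(Complex.I) * ((j : ℕ) : ℂ) * (l : ℂ))

/-- Sum of the entries of the `k`-th superdiagonal of `A`, divided by `m`. -/
def supDiagAvg {m : ℕ} (A : Matrix (Fin m) (Fin m) ℂ) (k : ℕ) : ℂ :=
  (m : ℂ)⁻¹ * ∑ l : Fin m, if h : (l : ℕ) + k < m then A l ⟨(l : ℕ) + k, h⟩ else 0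

/-- Sum of the entries of the `k`-th subdiagonal of `A`, divided by `m`. -/
def subDiagAvg {m : ℕ} (A : Matrix (Fin m) (Fin m) ℂ) (k : ℕ) : ℂ :=
  (m : ℂ)⁻¹ * ∑ l : Fin m, if h : (l : ℕ) + k < m then A ⟨(l : ℕ) + k, h⟩ l else 0

/-- Averaged `k`-th diagonal of `A`, for `k : ℤ`. -/
def diagAvg {m : ℕ} (A : Matrix (Fin m) (Fin m) ℂ) (k : ℤ) : ℂ :=
  if 0 ≤ k then supDiagAvg A k.toNat else subDiagAvg A (-k).toNat

/-- The Toeplitzification operator `𝒯`. -/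
def toep {m : ℕ} (A : Matrix (Fin m) (Fin m) ℂ) : Matrix (Fin m) (Fin m) ℂ :=
  Matrix.of fun i j =>
    if (i : ℕ) ≤ (j : ℕ) then supDiagAvg A ((j : ℕ) - (i : ℕ))
    else star (supDiagAvg A ((i : ℕ) - (j : ℕ)))

/-- The standard complex Gaussian distribution (independent real and imaginary
parts, each `N(0, 1/2)`, so that the variance `E|x|²` equals `1`). -/
def stdComplexGaussian : Measure ℂ :=
  Measure.map (Complex.measurableEquivRealProd.symm)
    ((gaussianReal 0 (1/2)).prod (gaussianReal 0 (1/2)))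

/-- Outer product `z z^H` of a vector with itself. -/
def vecOuter {m : ℕ} (z : Fin m → ℂ) : Matrix (Fin m) (Fin m) ℂ :=
  Matrix.of fun a b => z a * star (z b)

instance matrixMeasurableSpace {m n : ℕ} : MeasurableSpace (Matrix (Fin m) (Fin n) ℂ) :=
  (inferInstance : MeasurableSpace (Fin m → Fin n → ℂ))

/-- `i`-th column of a matrix, as a vector. -/
def colv {m N : ℕ} (A : Matrix (Fin m) (Fin N) ℂ) (i : Fin N) : Fin m → ℂ := fun a => A a i

/-- Maronna fixed-point equation for the scatter-matrix estimator built on the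
sample vectors `z 0, …, z (N-1)`. -/
def isFP {m N : ℕ} (u : ℝ → ℝ) (z : Fin N → Fin m → ℂ)
    (S : Matrix (Fin m) (Fin m) ℂ) : Prop :=
  S = (N : ℂ)⁻¹ • ∑ i : Fin N,
        u ((m : ℝ)⁻¹ * (star (z i) ⬝ᵥ (S⁻¹ *ᵥ z i)).re) • vecOuter (z i)

/-- Truncated spectral density `γ_m(λ) = ∑_{|k| ≤ m-1} c_k e^{ikλ}`. -/
def symbolTrunc (cf : ℤ → ℂ) (m : ℕ) (l : ℝ) : ℂ :=
  ∑ k ∈ Finset.Icc (1 - (m : ℤ)) ((m : ℤ) - 1),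
    cf k * Complex.exp (Complex.I * (k : ℂ) * (l : ℂ))

/-- `‖γ‖_∞ = sup_{λ ∈ [0,2π)} |∑_{k ∈ ℤ} c_k e^{ikλ}|`. -/
def supSymbol (cf : ℤ → ℂ) : ℝ :=
  ⨆ l ∈ Set.Ico (0 : ℝ) (2 * π),
    ‖∑' k : ℤ, cf k * Complex.exp (Complex.I * (k : ℂ) * (l : ℂ))‖

/-- Grid point `λ_i = 2πi/⌊N^β⌋`. -/
def gridPt (N : ℕ) (β : ℝ) (i : ℕ) : ℝ :=
  2 * π * (i : ℝ) / (Nat.floor ((N : ℝ) ^ β) : ℝ)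



lemma aux_int_std : Integrable (fun z : ℂ => ‖z‖ ^ 2) stdComplexGaussian := by
  unfold stdComplexGaussian
  rw [integrable_map_equiv]
  have h1 : Integrable (fun x : ℝ => x ^ 2) (gaussianReal 0 (1/2)) :=
    (memLp_id_gaussianReal (μ := 0) (v := 1/2) 2).integrable_sq
  have h2 := (h1.comp_fst (gaussianReal 0 (1/2))).add (h1.comp_snd (gaussianReal 0 (1/2)))
  refine h2.congr (ae_of_all _ fun x => ?_)
  simp only [Function.comp, Pi.add_apply, ← Complex.normSq_eq_norm_sq, Complex.normSq_apply]
  simp [Complex.measurableEquivRealProd]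
  ring

instance aux_prob_std : IsProbabilityMeasure stdComplexGaussian := by
  unfold stdComplexGaussian
  exact Measure.isProbabilityMeasure_map (MeasurableEquiv.measurable _).aemeasurable

lemma aux_dm_norm (m : ℕ) (l : ℝ) (j : Fin m) : ‖dm m l j‖ = (Real.sqrt m)⁻¹ := by
  unfold dm
  have : -(Complex.I) * ((j : ℕ) : ℂ) * (l : ℂ) = ((-(j : ℕ) * l : ℝ) : ℂ) * Complex.I := by
    push_cast; ring
  rw [norm_mul, this, Complex.norm_exp_ofReal_mul_I, mul_one, norm_inv, Complex.norm_real,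
    Real.norm_of_nonneg (Real.sqrt_nonneg _)]

lemma aux_det {m p N : ℕ} (M : Matrix (Fin m) (Fin p) ℂ) (K : ℝ) (hK : 0 ≤ K)
    (hM : ∀ s, ∑ i, ‖M i s‖ ≤ K) (G : Matrix (Fin N) (Fin N) ℂ)
    (D : Matrix (Fin N) (Fin p) ℂ) (l : ℝ) :
    ‖star (dm m l) ⬝ᵥ (((N : ℂ)⁻¹ • (M * Dᴴ * G * D * Mᴴ)) *ᵥ dm m l)‖ ≤
      (N : ℝ)⁻¹ * ((m : ℝ)⁻¹ * (K ^ 2 * p * ∑ i, ∑ j, ‖G i j‖ *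
        (∑ s, ‖D i s‖ ^ 2 + ∑ s, ‖D j s‖ ^ 2))) := by
  set d := dm m l with hd
  set a : Fin p → ℂ := Mᴴ *ᵥ d with ha
  set w : Fin N → ℂ := D *ᵥ a with hw
  have key : star d ⬝ᵥ (((N : ℂ)⁻¹ • (M * Dᴴ * G * D * Mᴴ)) *ᵥ d)
      = (N : ℂ)⁻¹ * (star w ⬝ᵥ (G *ᵥ w)) := by
    rw [Matrix.smul_mulVec, dotProduct_smul, smul_eq_mul]
    congr 1
    rw [hw, ha, star_mulVec, star_mulVec, conjTranspose_conjTranspose]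
    simp only [← Matrix.mulVec_mulVec, Matrix.dotProduct_mulVec, Matrix.vecMul_vecMul,
      Matrix.mul_assoc]
  have hna : ∀ s, ‖a s‖ ≤ (Real.sqrt m)⁻¹ * K := by
    intro s
    rw [ha, Matrix.mulVec, dotProduct]
    calc _ ≤ ∑ i, ‖Mᴴ s i * d i‖ := norm_sum_le _ _
      _ = ∑ i, (Real.sqrt m)⁻¹ * ‖M i s‖ := by
        refine Finset.sum_congr rfl fun i _ => ?_
        rw [norm_mul, hd, aux_dm_norm, conjTranspose_apply, norm_star, mul_comm]
      _ = (Real.sqrt m)⁻¹ * ∑ i, ‖M i s‖ := by rw [Finset.mul_sum]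
      _ ≤ _ := mul_le_mul_of_nonneg_left (hM s) (by positivity)
  have hnw : ∀ i, ‖w i‖ ≤ (Real.sqrt m)⁻¹ * K * ∑ s, ‖D i s‖ := by
    intro i
    rw [hw, Matrix.mulVec, dotProduct, Finset.mul_sum]
    refine (norm_sum_le _ _).trans (Finset.sum_le_sum fun s _ => ?_)
    rw [norm_mul, mul_comm]
    exact mul_le_mul_of_nonneg_right (hna s) (norm_nonneg _)
  have hw2 : ∀ i, ‖w i‖ ^ 2 ≤ (m : ℝ)⁻¹ * (K ^ 2 * p * ∑ s, ‖D i s‖ ^ 2) := by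
    intro i
    have h1 := pow_le_pow_left₀ (norm_nonneg _) (hnw i) 2
    have h2 : (∑ s, ‖D i s‖) ^ 2 ≤ p * ∑ s, ‖D i s‖ ^ 2 := by
      simpa using sq_sum_le_card_mul_sum_sq (s := Finset.univ) (f := fun s => ‖D i s‖)
    have h3 : ((Real.sqrt m)⁻¹) ^ 2 = (m : ℝ)⁻¹ := by
      rw [inv_pow, Real.sq_sqrt (Nat.cast_nonneg _)]
    rw [mul_pow, mul_pow, h3] at h1
    refine h1.trans ?_
    calc _ ≤ (m : ℝ)⁻¹ * K ^ 2 * (p * ∑ s, ‖D i s‖ ^ 2) :=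
          mul_le_mul_of_nonneg_left h2 (by positivity)
      _ = _ := by ring
  rw [key, norm_mul, norm_inv, Complex.norm_natCast]
  refine mul_le_mul_of_nonneg_left ?_ (by positivity)
  rw [dotProduct, Finset.mul_sum, Finset.mul_sum]
  refine (norm_sum_le _ _).trans (Finset.sum_le_sum fun i _ => ?_)
  rw [Matrix.mulVec, dotProduct, Finset.mul_sum, Finset.mul_sum, Finset.mul_sum]
  refine (norm_sum_le _ _).trans (Finset.sum_le_sum fun j _ => ?_)
  rw [norm_mul, norm_mul, Pi.star_apply, norm_star]
  have hij : ‖w i‖ * ‖w j‖ ≤ ‖w i‖ ^ 2 + ‖w j‖ ^ 2 := by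
    nlinarith [sq_nonneg (‖w i‖ - ‖w j‖), sq_nonneg (‖w i‖), sq_nonneg (‖w j‖)]
  calc _ = ‖G i j‖ * (‖w i‖ * ‖w j‖) := by ring
    _ ≤ ‖G i j‖ * ((m : ℝ)⁻¹ * (K ^ 2 * p * ∑ s, ‖D i s‖ ^ 2)
        + (m : ℝ)⁻¹ * (K ^ 2 * p * ∑ s, ‖D j s‖ ^ 2)) :=
        mul_le_mul_of_nonneg_left (hij.trans (add_le_add (hw2 i) (hw2 j))) (norm_nonneg _)
    _ = _ := by ring

lemma aux_ae {Ω : Type*} [MeasurableSpace Ω] (P : Measure Ω) (f : ℕ → Ω → ℝ)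
    (hf0 : ∀ n ω, 0 ≤ f n ω) (hfi : ∀ n, Integrable (f n) P) (g : ℕ → ℝ) (hg : Summable g)
    (hfg : ∀ n, ∫ ω, f n ω ∂P ≤ g n) :
    ∀ᵐ ω ∂P, Tendsto (fun n => f n ω) atTop (nhds 0) := by
  have h1 : ∫⁻ ω, ∑' n, ENNReal.ofReal (f n ω) ∂P ≠ ⊤ := by
    rw [lintegral_tsum fun n => (hfi n).aemeasurable.ennreal_ofReal]
    refine ne_top_of_le_ne_top hg.tsum_ofReal_ne_top (ENNReal.tsum_le_tsum fun n => ?_)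
    rw [← ofReal_integral_eq_lintegral_ofReal (hfi n) (ae_of_all _ (hf0 n))]
    exact ENNReal.ofReal_le_ofReal (hfg n)
  have h2 := ae_lt_top' (AEMeasurable.tsum
    fun n => (hfi n).aemeasurable.ennreal_ofReal) h1
  filter_upwards [h2] with ω hω
  have h3 := ENNReal.tendsto_atTop_zero_of_tsum_ne_top hω.ne
  have h4 := (ENNReal.tendsto_toReal ENNReal.zero_ne_top).comp h3
  simpa [Function.comp_def, ENNReal.toReal_ofReal (hf0 _ _)] using h4

/-- Uniform almost-sure convergence to zero of the signal
term `γ̂_m^{sign}(λ) = d_m(λ)^H ((1/N) M δ^H Γ δ M^H) d_m(λ)`. -/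
theorem stmt19
    {Ω : Type*} [MeasurableSpace Ω] (P : Measure Ω) [IsProbabilityMeasure P]
    (mdim : ℕ → ℕ) (c : ℝ) (hc : 0 < c)
    (hmc : Tendsto (fun N : ℕ => (mdim N : ℝ) / (N : ℝ)) atTop (nhds c))
    (p : ℕ)
    (M : (N : ℕ) → Matrix (Fin (mdim N)) (Fin p) ℂ)
    (hM_col : ∃ K : ℝ, ∀ N s, ∑ i, ‖M N i s‖ ≤ K)
    (hM_bdd : ∃ K : ℝ, ∀ N, opNorm (M N) ≤ K)
    (Γm : (N : ℕ) → Matrix (Fin N) (Fin N) ℂ)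
    (hΓ_psd : ∀ N, (Γm N).PosSemidef)
    (hΓ_sum : ∃ K : ℝ, ∀ N, ∑ i : Fin N, ∑ j : Fin N, ‖Γm N i j‖ ≤ K)
    (hΓ_bdd : ∃ K : ℝ, ∀ N, opNorm (Γm N) ≤ K)
    (δm : (N : ℕ) → Ω → Matrix (Fin N) (Fin p) ℂ)
    (hδ_indep : ∀ N, iIndepFun
      (fun (ij : Fin N × Fin p) => fun ω => δm N ω ij.1 ij.2) P)
    (hδ_law : ∀ N i j, Measure.map (fun ω => δm N ω i j) P = stdComplexGaussian)
 :
    ∀ᵐ ω ∂P, Tendsto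
      (fun N : ℕ =>
        ⨆ l ∈ Set.Ico (0 : ℝ) (2 * π),
          ‖star (dm (mdim N) l) ⬝ᵥ
            (((N : ℂ)⁻¹ • (M N * (δm N ω)ᴴ * Γm N * δm N ω * (M N)ᴴ)) *ᵥ
              dm (mdim N) l)‖)
      atTop (nhds 0) := by
  obtain ⟨K₀, hK₀⟩ := hM_col
  obtain ⟨L, hL⟩ := hΓ_sum
  set K := |K₀| with hKdef
  have hK : ∀ N s, ∑ i, ‖M N i s‖ ≤ K := fun N s => (hK₀ N s).trans (le_abs_self _)
  set C := ∫ z, ‖z‖ ^ 2 ∂stdComplexGaussian with hC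
  have hC0 : 0 ≤ C := integral_nonneg fun _ => by positivity
  have hmeas : ∀ N i j, AEMeasurable (fun ω => δm N ω i j) P := by
    intro N i j
    by_contra h
    have h1 := hδ_law N i j
    rw [Measure.map_of_not_aemeasurable h] at h1
    exact IsProbabilityMeasure.ne_zero stdComplexGaussian h1.symm
  have hint : ∀ N i j, Integrable (fun ω => ‖δm N ω i j‖ ^ 2) P := by
    intro N i j
    have h1 := aux_int_std
    rw [← hδ_law N i j] at h1
    exact h1.comp_aemeasurable (hmeas N i j)
  have hval : ∀ N i j, ∫ ω, ‖δm N ω i j‖ ^ 2 ∂P = C := by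
    intro N i j
    rw [hC, ← hδ_law N i j, integral_map (hmeas N i j) (by fun_prop)]
  have hintS : ∀ N i, Integrable (fun ω => ∑ s, ‖δm N ω i s‖ ^ 2) P := fun N i =>
    integrable_finset_sum _ fun s _ => hint N i s
  have hvalS : ∀ N i, ∫ ω, ∑ s, ‖δm N ω i s‖ ^ 2 ∂P = p * C := by
    intro N i
    rw [integral_finset_sum _ fun s _ => hint N i s]
    simp [hval]
  let S : ℕ → Ω → ℝ := fun N ω => ∑ i, ∑ j, ‖Γm N i j‖ *
        (∑ s, ‖δm N ω i s‖ ^ 2 + ∑ s, ‖δm N ω j s‖ ^ 2)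
  have hS0 : ∀ N ω, 0 ≤ S N ω := fun N ω => by positivity
  have hI1 : ∀ N i j, Integrable (fun ω => ‖Γm N i j‖ *
        (∑ s, ‖δm N ω i s‖ ^ 2 + ∑ s, ‖δm N ω j s‖ ^ 2)) P := fun N i j =>
    ((hintS N i).add (hintS N j)).const_mul _
  have hSi : ∀ N, Integrable (S N) P := fun N =>
    integrable_finset_sum _ fun i _ => integrable_finset_sum _ fun j _ => hI1 N i j
  have hSv : ∀ N, ∫ ω, S N ω ∂P ≤ L * (2 * p * C) := by
    intro N
    have : ∫ ω, S N ω ∂P = (∑ i, ∑ j, ‖Γm N i j‖) * (2 * p * C) := by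
      rw [integral_finset_sum _ fun i _ => integrable_finset_sum _ fun j _ => hI1 N i j,
        Finset.sum_mul]
      refine Finset.sum_congr rfl fun i _ => ?_
      rw [integral_finset_sum _ fun j _ => hI1 N i j, Finset.sum_mul]
      refine Finset.sum_congr rfl fun j _ => ?_
      rw [integral_const_mul, integral_add (hintS N i) (hintS N j), hvalS, hvalS]
      ring
    rw [this]
    exact mul_le_mul_of_nonneg_right (hL N) (by positivity)
  have hlim := aux_ae P (fun N ω => ((N : ℝ) ^ 2)⁻¹ * S N ω)
    (fun N ω => mul_nonneg (by positivity) (hS0 N ω)) (fun N => (hSi N).const_mul _)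
    (fun N => ((N : ℝ) ^ 2)⁻¹ * (L * (2 * p * C)))
    ((Real.summable_nat_pow_inv.2 (by norm_num)).mul_right _)
    (fun N => by
      rw [integral_const_mul]
      exact mul_le_mul_of_nonneg_left (hSv N) (by positivity))
  filter_upwards [hlim] with ω hω
  have hω2 := hω.const_mul (2 / c * (K ^ 2 * p))
  rw [mul_zero] at hω2
  refine squeeze_zero' (Eventually.of_forall fun N => ?_) ?_ hω2
  · exact Real.iSup_nonneg fun l => Real.iSup_nonneg fun _ => norm_nonneg _
  · filter_upwards [hmc.eventually (lt_mem_nhds (half_lt_self hc)), eventually_gt_atTop 0]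
      with N hN hN0
    have hNpos : (0 : ℝ) < N := by exact_mod_cast hN0
    have hm : c / 2 * N < mdim N := (lt_div_iff₀ hNpos).1 hN
    have hcN : 0 < c / 2 * N := by positivity
    have hinv : ((mdim N : ℕ) : ℝ)⁻¹ ≤ (c / 2 * N)⁻¹ := inv_anti₀ hcN hm.le
    have hR : 0 ≤ K ^ 2 * p * S N ω := mul_nonneg (by positivity) (hS0 N ω)
    have hb : ∀ l, ‖star (dm (mdim N) l) ⬝ᵥ
            (((N : ℂ)⁻¹ • (M N * (δm N ω)ᴴ * Γm N * δm N ω * (M N)ᴴ)) *ᵥ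
              dm (mdim N) l)‖ ≤ 2 / c * (K ^ 2 * p) * (((N : ℝ) ^ 2)⁻¹ * S N ω) := by
      intro l
      refine (aux_det (M N) K (abs_nonneg _) (hK N) (Γm N) (δm N ω) l).trans ?_
      calc _ ≤ (N : ℝ)⁻¹ * ((c / 2 * N)⁻¹ * (K ^ 2 * p * S N ω)) :=
            mul_le_mul_of_nonneg_left (mul_le_mul_of_nonneg_right hinv hR) (by positivity)
        _ = _ := by field_simp
    have hnn := (norm_nonneg _).trans (hb 0)
    exact Real.iSup_le (fun l => Real.iSup_le (fun _ => hb l) hnn) hnn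

end
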